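/- Let X be a real inner product space, D a metric space, C ⊆ X a set, and F : X × D → X a map such that for every d ∈ D the map F(·, d) is α-strongly monotone for a fixed α > 0, and such that ‖F(x, d₁) − F(x, d₂)‖ ≤ L · dist(d₁, d₂) for all x ∈ C and all d₁, d₂ ∈ D. If x₁ is a solution of VI(F(·, d₁), C) and x₂ is a solution of VI(F(·, d₂), C), then ‖x₁ − x₂‖ ≤ (L/α) · dist(d₁, d₂). In particular, the solution map d ↦ x_d of the parametrized variational inequality is (L/α)-Lipschitz continuous. -/

import Mathlib

open RealInnerProductSpace

/-! Testing each of the two variational inequalities with the solution of the other gives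
`⟪G₁ x₁, x₁ - x₂⟫ ≤ 0 ≤ ⟪G₂ x₂, x₁ - x₂⟫`. Strong monotonicity of `G₁` alone then yields
`α * ‖x₁ - x₂‖ ^ 2 ≤ ⟪G₂ x₂ - G₁ x₂, x₁ - x₂⟫`, and Cauchy–Schwarz bounds `α * ‖x₁ - x₂‖` by the
perturbation `‖G₂ x₂ - G₁ x₂‖` at the single point `x₂`. -/

section VariationalInequality

variable {X : Type*} [SeminormedAddCommGroup X] [InnerProductSpace ℝ X]

/-- Strong monotonicity of `G` with modulus `α`, required only between points of `C`. -/
def StronglyMonotoneOn (α : ℝ) (G : X → X) (C : Set X) : Prop :=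
  ∀ x ∈ C, ∀ y ∈ C, α * ‖x - y‖ ^ 2 ≤ ⟪G x - G y, x - y⟫

/-- `x` is a solution of the variational inequality `VI(G, C)`. -/
def IsVISolution (G : X → X) (C : Set X) (x : X) : Prop :=
  x ∈ C ∧ ∀ y ∈ C, 0 ≤ ⟪G x, y - x⟫

theorem mul_norm_le_norm_of_mul_norm_sq_le_inner {c : ℝ} {v w : X}
    (h : c * ‖v‖ ^ 2 ≤ ⟪w, v⟫) : c * ‖v‖ ≤ ‖w‖ := by
  obtain hv | hv := (norm_nonneg v).eq_or_lt
  · simp [← hv]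
  · refine le_of_mul_le_mul_right ?_ hv
    calc
      c * ‖v‖ * ‖v‖ = c * ‖v‖ ^ 2 := by ring
      _ ≤ ⟪w, v⟫ := h
      _ ≤ ‖w‖ * ‖v‖ := real_inner_le_norm w v

variable {C : Set X} {G₁ G₂ : X → X} {x₁ x₂ : X}

theorem IsVISolution.inner_sub_nonpos (h₁ : IsVISolution G₁ C x₁) (h₂ : IsVISolution G₂ C x₂) :
    ⟪G₁ x₁ - G₂ x₂, x₁ - x₂⟫ ≤ 0 := by
  have test₁ : ⟪G₁ x₁, x₁ - x₂⟫ ≤ 0 := by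
    rw [← neg_sub x₂ x₁, inner_neg_right]
    exact neg_nonpos.mpr (h₁.2 x₂ h₂.1)
  have test₂ : 0 ≤ ⟪G₂ x₂, x₁ - x₂⟫ := h₂.2 x₁ h₁.1
  rw [inner_sub_left]
  linarith

theorem StronglyMonotoneOn.mul_norm_solution_sub_le {α : ℝ} (hG₁ : StronglyMonotoneOn α G₁ C)
    (h₁ : IsVISolution G₁ C x₁) (h₂ : IsVISolution G₂ C x₂) :
    α * ‖x₁ - x₂‖ ≤ ‖G₁ x₂ - G₂ x₂‖ := by
  rw [norm_sub_rev (G₁ x₂)]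
  apply mul_norm_le_norm_of_mul_norm_sq_le_inner
  calc
    α * ‖x₁ - x₂‖ ^ 2 ≤ ⟪G₁ x₁ - G₁ x₂, x₁ - x₂⟫ := hG₁ x₁ h₁.1 x₂ h₂.1
    _ = ⟪G₁ x₁ - G₂ x₂, x₁ - x₂⟫ + ⟪G₂ x₂ - G₁ x₂, x₁ - x₂⟫ := by
      rw [← inner_add_left, sub_add_sub_cancel]
    _ ≤ ⟪G₂ x₂ - G₁ x₂, x₁ - x₂⟫ := add_le_of_nonpos_left (h₁.inner_sub_nonpos h₂)

theorem stmt_2_general {D : Type*} [PseudoMetricSpace D] {F : X → D → X} {α L : ℝ} (hα : 0 < α)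
    {d₁ d₂ : D} (hmono : StronglyMonotoneOn α (F · d₁) C)
    (hLip : ∀ x ∈ C, ∀ d d' : D, ‖F x d - F x d'‖ ≤ L * dist d d')
    (hx₁ : IsVISolution (F · d₁) C x₁) (hx₂ : IsVISolution (F · d₂) C x₂) :
    ‖x₁ - x₂‖ ≤ (L / α) * dist d₁ d₂ := by
  rw [div_mul_eq_mul_div, le_div_iff₀' hα]
  calc
    α * ‖x₁ - x₂‖ ≤ ‖F x₂ d₁ - F x₂ d₂‖ := hmono.mul_norm_solution_sub_le hx₁ hx₂
    _ ≤ L * dist d₁ d₂ := hLip x₂ hx₂.1 d₁ d₂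

end VariationalInequality

/-- Lipschitz dependence of the solution of a parametrized variational inequality on the
parameter: if `F (·, d)` is `α`-strongly monotone for every `d` and `F (x, ·)` is
`L`-Lipschitz in the parameter (uniformly over `x ∈ C`), then solutions of
`VI(F(·, d₁), C)` and `VI(F(·, d₂), C)` satisfy `‖x₁ - x₂‖ ≤ (L / α) * dist d₁ d₂`. -/
theorem stmt_2 {X : Type*} [NormedAddCommGroup X] [InnerProductSpace ℝ X]
    {D : Type*} [MetricSpace D]
    (C : Set X) (F : X → D → X) (α L : ℝ) (hα : 0 < α)
    (hmono : ∀ d : D, ∀ x y : X, α * ‖x - y‖ ^ 2 ≤ ⟪F x d - F y d, x - y⟫)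
    (hLip : ∀ x ∈ C, ∀ d₁ d₂ : D, ‖F x d₁ - F x d₂‖ ≤ L * dist d₁ d₂)
    (d₁ d₂ : D) (x₁ x₂ : X)
    (hx₁ : x₁ ∈ C ∧ ∀ x ∈ C, 0 ≤ ⟪F x₁ d₁, x - x₁⟫)
    (hx₂ : x₂ ∈ C ∧ ∀ x ∈ C, 0 ≤ ⟪F x₂ d₂, x - x₂⟫) :
    ‖x₁ - x₂‖ ≤ (L / α) * dist d₁ d₂ := by
  exact stmt_2_general hα (fun x _ y _ => hmono d₁ x y) hLip hx₁ hx₂
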